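/- Let n ≥ 1 be an integer and m₁, m₂ coprime positive integers with m₁ ≠ m₂; set d := (m₁−m₂)/(m₁+m₂), M := (n+1)(m₁+m₂), F_n := (y + d x^{n+1}, (n+1)x^{2n+1} + (n+1)d x^n y), and I_M := (y − x^{n+1})^{m₁}(y + x^{n+1})^{m₂}. Let p ∈ ℝ[x,y] be quasi-homogeneous of type t = (1,n+1) of some degree j ≥ 0 with ∇p·F_n = 0. Then: if M divides j, there exists c ∈ ℝ with p = c·I_M^{j/M}; and if M does not divide j, then p = 0. -/

import Mathlib

open MvPolynomial

/-- A polynomial in two variables is quasi-homogeneous of type `(t₁,t₂)` and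
degree `k` if every monomial `x^a y^b` occurring in it satisfies `t₁a + t₂b = k`. -/
def IsQH (t₁ t₂ k : ℕ) (p : MvPolynomial (Fin 2) ℝ) : Prop :=
  ∀ m ∈ p.support, t₁ * m 0 + t₂ * m 1 = k

/-- `∇p · (P,Q)` for a planar polynomial vector field `(P,Q)`. -/
noncomputable def gradDot (p P Q : MvPolynomial (Fin 2) ℝ) : MvPolynomial (Fin 2) ℝ :=
  pderiv 0 p * P + pderiv 1 p * Q

/-!
Setting `x = 1` is injective on quasi-homogeneous polynomials of a fixed degree, and Euler's
identity turns `∇p · F_n = 0` into `(n + 1) (X² - 1) f' = j (X + d) f` for `f = p(1, X)`.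
Comparing the lowest-order terms of the two sides at the roots `X = ±1` gives the multiplicities
`a`, `b` of these roots of `f ≠ 0`: they satisfy `a M = j m₁` and `b M = j m₂`, hence `M ∣ j` by
coprimality. Conversely the curves `y = ± x^(n+1)` are invariant with cofactors that cancel in
`I_M`, so `I_M^(j/M)` is a first integral of degree `j`. Any two solutions of the first-order
equation above have zero Wronskian and are therefore proportional.
-/

section QuasiHomogeneous

lemma weight_fin_two_apply (t₁ t₂ : ℕ) (m : Fin 2 →₀ ℕ) :
    Finsupp.weight ![t₁, t₂] m = t₁ * m 0 + t₂ * m 1 := by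
  simp [Finsupp.weight_eq_sum, mul_comm]

lemma isQH_iff {t₁ t₂ k : ℕ} {p : MvPolynomial (Fin 2) ℝ} :
    IsQH t₁ t₂ k p ↔ IsWeightedHomogeneous ![t₁, t₂] p k := by
  simp only [IsQH, IsWeightedHomogeneous, mem_support_iff, weight_fin_two_apply]

end QuasiHomogeneous

section Univariate

open Polynomial (derivative wronskian)

lemma rootMultiplicity_mul_eval_of_mul_derivative_eq {R : Type*} [CommRing R] [IsDomain R]
    {f g q : Polynomial R} {r : R} (hf : f ≠ 0)
    (h : (Polynomial.X - Polynomial.C r) * q * derivative f = g * f) :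
    f.rootMultiplicity r * q.eval r = g.eval r := by
  obtain ⟨s, hfs, hs⟩ := f.exists_eq_pow_rootMultiplicity_mul_and_not_dvd hf r
  generalize f.rootMultiplicity r = a at hfs ⊢
  set u := Polynomial.X - Polynomial.C r with hu
  have hpow : u * derivative (u ^ a) = a * u ^ a := by
    cases a with
    | zero => simp
    | succ a =>
      rw [hu, Polynomial.derivative_X_sub_C_pow, Nat.add_sub_cancel, Polynomial.C_eq_natCast]
      ring
  have hcancel : q * (a * s + u * derivative s) = g * s := by
    apply mul_left_cancel₀ (pow_ne_zero a (Polynomial.X_sub_C_ne_zero r))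
    rw [hfs, Polynomial.derivative_mul] at h
    linear_combination h - q * s * hpow
  have hs_eval : s.eval r ≠ 0 := by rwa [Polynomial.dvd_iff_isRoot] at hs
  have heval := congrArg (Polynomial.eval r) hcancel
  simp only [hu, Polynomial.eval_mul, Polynomial.eval_add, Polynomial.eval_sub, Polynomial.eval_X,
    Polynomial.eval_C, Polynomial.eval_natCast, sub_self, zero_mul, add_zero] at heval
  apply mul_right_cancel₀ hs_eval
  linear_combination heval

variable {K : Type*} [Field K] [CharZero K]

lemma exists_eq_C_mul_of_wronskian_eq_zero {f g : Polynomial K} (hg : g ≠ 0)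
    (h : wronskian f g = 0) : ∃ c : K, f = Polynomial.C c * g := by
  obtain ⟨e, f', g', hcop, rfl, rfl⟩ : ∃ e f' g', IsCoprime f' g' ∧ f = e * f' ∧ g = e * g' := by
    classical
    let := EuclideanDomain.gcdMonoid (Polynomial K)
    obtain ⟨f', g', hf, hg, hunit⟩ := extract_gcd f g
    exact ⟨_, f', g', (gcd_isUnit_iff f' g').1 hunit, hf, hg⟩
  have he : e ≠ 0 := left_ne_zero_of_mul hg
  have hw : wronskian f' g' = 0 := by
    refine (mul_eq_zero.1 ?_).resolve_left (pow_ne_zero 2 he)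
    rw [← h, wronskian, wronskian, Polynomial.derivative_mul, Polynomial.derivative_mul]
    ring
  obtain ⟨hf', hg'⟩ := hcop.wronskian_eq_zero_iff.1 hw
  obtain ⟨a, rfl⟩ : ∃ a, f' = Polynomial.C a := ⟨_, Polynomial.eq_C_of_derivative_eq_zero hf'⟩
  obtain ⟨b, rfl⟩ : ∃ b, g' = Polynomial.C b := ⟨_, Polynomial.eq_C_of_derivative_eq_zero hg'⟩
  have hb : b ≠ 0 := by rintro rfl; simp at hg
  refine ⟨a / b, ?_⟩
  rw [mul_left_comm, ← Polynomial.C_mul, div_mul_cancel₀ a hb]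

lemma exists_eq_C_mul_of_mul_derivative_eq {f g s t : Polynomial K} (hg : g ≠ 0) (hs : s ≠ 0)
    (hf_ode : s * derivative f = t * f) (hg_ode : s * derivative g = t * g) :
    ∃ c : K, f = Polynomial.C c * g := by
  refine exists_eq_C_mul_of_wronskian_eq_zero hg ((mul_eq_zero.1 ?_).resolve_left hs)
  rw [wronskian]
  linear_combination f * hg_ode - g * hf_ode

end Univariate

section Dehomogenization

variable {R : Type*} [CommSemiring R]

/-- The substitution `(x, y) ↦ (1, X)`, which dehomogenizes a polynomial that is quasi-homogeneous
of type `(1, w)`. -/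
noncomputable def dehomogenize : MvPolynomial (Fin 2) R →ₐ[R] Polynomial R :=
  aeval ![1, Polynomial.X]

@[simp]
lemma dehomogenize_X_zero : dehomogenize (X 0 : MvPolynomial (Fin 2) R) = 1 := by
  simp [dehomogenize]

@[simp]
lemma dehomogenize_X_one : dehomogenize (X 1 : MvPolynomial (Fin 2) R) = Polynomial.X := by
  simp [dehomogenize]

@[simp]
lemma dehomogenize_C (c : R) : dehomogenize (C c) = Polynomial.C c :=
  dehomogenize.commutes c

lemma dehomogenize_monomial (m : Fin 2 →₀ ℕ) (a : R) :
    dehomogenize (monomial m a) = Polynomial.monomial (m 1) a := by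
  rw [dehomogenize, aeval_monomial, Finsupp.prod_fintype _ _ (by simp)]
  simp [Polynomial.C_mul_X_pow_eq_monomial]

lemma dehomogenize_pderiv_one (p : MvPolynomial (Fin 2) R) :
    dehomogenize (pderiv 1 p) = Polynomial.derivative (dehomogenize p) := by
  induction p using MvPolynomial.induction_on' with
  | monomial m a => simp [pderiv_monomial, dehomogenize_monomial, Polynomial.derivative_monomial]
  | add p q hp hq => simp [hp, hq]

variable {w j : ℕ}

lemma coeff_dehomogenize {p : MvPolynomial (Fin 2) R} (hp : IsWeightedHomogeneous ![1, w] p j)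
    {m : Fin 2 →₀ ℕ} (hm : Finsupp.weight ![1, w] m = j) :
    (dehomogenize p).coeff (m 1) = p.coeff m := by
  have hsupp : ∀ b ∈ p.support, b ≠ m → b 1 ≠ m 1 := by
    intro b hb hbm h1
    have hwb := (hp (mem_support_iff.1 hb)).trans hm.symm
    rw [weight_fin_two_apply, weight_fin_two_apply, h1, Nat.add_right_cancel_iff, one_mul, one_mul]
      at hwb
    exact hbm (Finsupp.ext (Fin.forall_fin_two.2 ⟨hwb, h1⟩))
  conv_lhs => rw [p.as_sum, map_sum, Polynomial.finsetSum_coeff]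
  simp only [dehomogenize_monomial, Polynomial.coeff_monomial]
  rw [Finset.sum_eq_single m (fun b hb hbm ↦ if_neg (hsupp b hb hbm)) (by simp), if_pos rfl]

lemma injOn_dehomogenize :
    Set.InjOn dehomogenize {p : MvPolynomial (Fin 2) R | IsWeightedHomogeneous ![1, w] p j} := by
  intro p hp q hq h
  ext m
  by_cases hm : Finsupp.weight ![1, w] m = j
  · rw [← coeff_dehomogenize hp hm, ← coeff_dehomogenize hq hm, h]
  · rw [hp.coeff_eq_zero m hm, hq.coeff_eq_zero m hm]

lemma dehomogenize_ne_zero {p : MvPolynomial (Fin 2) R} (hp : IsWeightedHomogeneous ![1, w] p j)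
    (hp0 : p ≠ 0) : dehomogenize p ≠ 0 := fun h ↦
  hp0 (injOn_dehomogenize hp (isWeightedHomogeneous_zero R _ j) (h.trans (map_zero _).symm))

lemma dehomogenize_pderiv_zero_add {p : MvPolynomial (Fin 2) R}
    (hp : IsWeightedHomogeneous ![1, w] p j) :
    dehomogenize (pderiv 0 p) +
        (w : Polynomial R) * Polynomial.X * Polynomial.derivative (dehomogenize p) =
      (j : Polynomial R) * dehomogenize p := by
  simpa [dehomogenize_pderiv_one, mul_assoc] using
    congrArg dehomogenize hp.sum_weight_X_mul_pderiv

lemma derivation_fin_two_apply (D : Derivation R (MvPolynomial (Fin 2) R) (MvPolynomial (Fin 2) R))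
    (p : MvPolynomial (Fin 2) R) : D p = pderiv 0 p * D (X 0) + pderiv 1 p * D (X 1) := by
  have h : D = D (X 0) • pderiv 0 + D (X 1) • pderiv 1 :=
    derivation_ext (Fin.forall_fin_two.2 (by simp))
  conv_lhs => rw [h]
  simp [mul_comm]

/-- The wedge product `w y P - x Q` of `D = P ∂x + Q ∂y` with the Euler field `x ∂x + w y ∂y` of
type `(1, w)`, which measures how far `D` is from being parallel to it. -/
noncomputable def eulerWedge {R : Type*} [CommRing R] (w : ℕ)
    (D : Derivation R (MvPolynomial (Fin 2) R) (MvPolynomial (Fin 2) R)) : MvPolynomial (Fin 2) R :=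
  (w : MvPolynomial (Fin 2) R) * X 1 * D (X 0) - X 0 * D (X 1)

lemma dehomogenize_ode_of_derivation_eq_zero {R : Type*} [CommRing R]
    (D : Derivation R (MvPolynomial (Fin 2) R) (MvPolynomial (Fin 2) R))
    {p : MvPolynomial (Fin 2) R} (hp : IsWeightedHomogeneous ![1, w] p j) (hD : D p = 0) :
    dehomogenize (eulerWedge w D) * Polynomial.derivative (dehomogenize p) =
      (j : Polynomial R) * dehomogenize (D (X 0)) * dehomogenize p := by
  have hD' := congrArg dehomogenize ((derivation_fin_two_apply D p).symm.trans hD)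
  rw [map_add, map_mul, map_mul, dehomogenize_pderiv_one, map_zero] at hD'
  simp only [eulerWedge, map_sub, map_mul, map_natCast, dehomogenize_X_zero, dehomogenize_X_one]
  linear_combination dehomogenize (D (X 0)) * dehomogenize_pderiv_zero_add hp - hD'

lemma exists_eq_C_mul_of_derivation_eq_zero {K : Type*} [Field K] [CharZero K]
    {D : Derivation K (MvPolynomial (Fin 2) K) (MvPolynomial (Fin 2) K)}
    (hD : dehomogenize (eulerWedge w D) ≠ 0)
    {p q : MvPolynomial (Fin 2) K} (hp : IsWeightedHomogeneous ![1, w] p j)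
    (hq : IsWeightedHomogeneous ![1, w] q j) (hq0 : q ≠ 0) (hDp : D p = 0) (hDq : D q = 0) :
    ∃ c : K, p = C c * q := by
  obtain ⟨c, hc⟩ := exists_eq_C_mul_of_mul_derivative_eq (dehomogenize_ne_zero hq hq0) hD
    (dehomogenize_ode_of_derivation_eq_zero D hp hDp)
    (dehomogenize_ode_of_derivation_eq_zero D hq hDq)
  exact ⟨c, injOn_dehomogenize hp (hq.C_mul c) (by simp [hc])⟩

end Dehomogenization

section VectorField

lemma derivation_pow_of_apply_eq_mul {R A : Type*} [CommSemiring R] [CommSemiring A] [Algebra R A]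
    (D : Derivation R A A) {u a : A} (h : D u = a * u) (k : ℕ) : D (u ^ k) = k * a * u ^ k := by
  cases k with
  | zero => simp
  | succ k =>
    rw [D.leibniz_pow, h, Nat.add_sub_cancel, nsmul_eq_mul, smul_eq_mul]
    ring

variable {R : Type*} [CommRing R]

/-- The operator `ℓ : p ↦ ∇p · F_n`, as the derivation whose values on the coordinates are the
components of `F_n`; the parameter `d` is arbitrary. -/
noncomputable def homologicalOperator (n : ℕ) (d : R) :
    Derivation R (MvPolynomial (Fin 2) R) (MvPolynomial (Fin 2) R) :=
  mkDerivation R ![X 1 + C d * X 0 ^ (n + 1),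
    C ((n : R) + 1) * X 0 ^ (2 * n + 1) + C (((n : R) + 1) * d) * X 0 ^ n * X 1]

@[simp]
lemma homologicalOperator_X_zero (n : ℕ) (d : R) :
    homologicalOperator n d (X 0) = X 1 + C d * X 0 ^ (n + 1) :=
  mkDerivation_X R _ 0

@[simp]
lemma homologicalOperator_X_one (n : ℕ) (d : R) :
    homologicalOperator n d (X 1) =
      C ((n : R) + 1) * X 0 ^ (2 * n + 1) + C (((n : R) + 1) * d) * X 0 ^ n * X 1 :=
  mkDerivation_X R _ 1

variable (R) in
/-- The primitive first integral `I_M`, where `M = (n + 1) (m₁ + m₂)`. -/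
noncomputable def primitiveIntegral (n m₁ m₂ : ℕ) : MvPolynomial (Fin 2) R :=
  (X 1 - X 0 ^ (n + 1)) ^ m₁ * (X 1 + X 0 ^ (n + 1)) ^ m₂

lemma isWeightedHomogeneous_primitiveIntegral (n m₁ m₂ : ℕ) :
    IsWeightedHomogeneous ![1, n + 1] (primitiveIntegral R n m₁ m₂) ((n + 1) * (m₁ + m₂)) := by
  have hx : IsWeightedHomogeneous ![1, n + 1] (X 0 ^ (n + 1) : MvPolynomial (Fin 2) R) (n + 1) := by
    simpa using (isWeightedHomogeneous_X R ![1, n + 1] 0).pow (n + 1)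
  have hy : IsWeightedHomogeneous ![1, n + 1] (X 1 : MvPolynomial (Fin 2) R) (n + 1) :=
    isWeightedHomogeneous_X R _ 1
  have h := ((hy.sub hx).pow m₁).mul ((hy.add hx).pow m₂)
  rwa [smul_eq_mul, smul_eq_mul, ← add_mul, mul_comm (m₁ + m₂)] at h

lemma primitiveIntegral_ne_zero [IsDomain R] (n m₁ m₂ : ℕ) : primitiveIntegral R n m₁ m₂ ≠ 0 := by
  have h : dehomogenize (primitiveIntegral R n m₁ m₂) ≠ 0 := by
    simpa [primitiveIntegral] using
      mul_ne_zero (pow_ne_zero m₁ (Polynomial.X_sub_C_ne_zero (1 : R)))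
        (pow_ne_zero m₂ (Polynomial.X_add_C_ne_zero (1 : R)))
  exact ne_zero_of_map h

lemma homologicalOperator_X_one_sub (n : ℕ) (d : R) :
    homologicalOperator n d (X 1 - X 0 ^ (n + 1)) =
      C (((n : R) + 1) * (d - 1)) * X 0 ^ n * (X 1 - X 0 ^ (n + 1)) := by
  simp only [map_sub, Derivation.leibniz_pow, homologicalOperator_X_zero, homologicalOperator_X_one,
    add_tsub_cancel_right, smul_eq_mul, nsmul_eq_mul, Nat.cast_add, Nat.cast_one, C_add, C_mul,
    C_1, map_natCast]
  ring

lemma homologicalOperator_X_one_add (n : ℕ) (d : R) :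
    homologicalOperator n d (X 1 + X 0 ^ (n + 1)) =
      C (((n : R) + 1) * (d + 1)) * X 0 ^ n * (X 1 + X 0 ^ (n + 1)) := by
  simp only [map_add, Derivation.leibniz_pow, homologicalOperator_X_zero, homologicalOperator_X_one,
    add_tsub_cancel_right, smul_eq_mul, nsmul_eq_mul, Nat.cast_add, Nat.cast_one, C_mul, C_1,
    map_natCast]
  ring

lemma homologicalOperator_primitiveIntegral (n : ℕ) {m₁ m₂ : ℕ} {d : R}
    (hd : ((m₁ : R) + m₂) * d = m₁ - m₂) :
    homologicalOperator n d (primitiveIntegral R n m₁ m₂) = 0 := by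
  have hdC : (m₁ + m₂) * (C d : MvPolynomial (Fin 2) R) = m₁ - m₂ := by
    simpa using congrArg (C (σ := Fin 2)) hd
  rw [primitiveIntegral, Derivation.leibniz,
    derivation_pow_of_apply_eq_mul _ (homologicalOperator_X_one_sub n d),
    derivation_pow_of_apply_eq_mul _ (homologicalOperator_X_one_add n d)]
  simp only [smul_eq_mul, map_mul, map_add, map_sub, map_natCast, map_one]
  linear_combination ((n : MvPolynomial (Fin 2) R) + 1) * X 0 ^ n * (X 1 - X 0 ^ (n + 1)) ^ m₁ *
    (X 1 + X 0 ^ (n + 1)) ^ m₂ * hdC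

lemma eulerWedge_homologicalOperator (n : ℕ) (d : R) :
    eulerWedge (n + 1) (homologicalOperator n d) =
      C ((n : R) + 1) * ((X 1 - X 0 ^ (n + 1)) * (X 1 + X 0 ^ (n + 1))) := by
  simp only [eulerWedge, homologicalOperator_X_zero, homologicalOperator_X_one, Nat.cast_add,
    Nat.cast_one, C_add, C_mul, C_1, map_natCast]
  ring

variable [IsDomain R]

lemma dehomogenize_eulerWedge_homologicalOperator_ne_zero [CharZero R] (n : ℕ) (d : R) :
    dehomogenize (eulerWedge (n + 1) (homologicalOperator n d)) ≠ 0 := by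
  rw [eulerWedge_homologicalOperator, map_mul, dehomogenize_C]
  refine mul_ne_zero (Polynomial.C_ne_zero.2 (Nat.cast_add_one_ne_zero n)) ?_
  simpa using mul_ne_zero (Polynomial.X_sub_C_ne_zero (1 : R)) (Polynomial.X_add_C_ne_zero (1 : R))

variable {n j : ℕ} {d : R} {p : MvPolynomial (Fin 2) R}

lemma rootMultiplicity_dehomogenize
    (hp : IsWeightedHomogeneous ![1, n + 1] p j) (hp0 : p ≠ 0)
    (hker : homologicalOperator n d p = 0) :
    (dehomogenize p).rootMultiplicity 1 * (2 * ((n : R) + 1)) = j * (1 + d) ∧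
      (dehomogenize p).rootMultiplicity (-1) * (2 * ((n : R) + 1)) = j * (1 - d) := by
  have hf := dehomogenize_ne_zero hp hp0
  have hode := dehomogenize_ode_of_derivation_eq_zero _ hp hker
  rw [eulerWedge_homologicalOperator] at hode
  simp only [map_mul, map_add, map_sub, map_pow, map_natCast, map_one, dehomogenize_C,
    dehomogenize_X_zero, dehomogenize_X_one, homologicalOperator_X_zero, one_pow, mul_one] at hode
  have h₁ := rootMultiplicity_mul_eval_of_mul_derivative_eq (r := 1)
    (q := ((n : Polynomial R) + 1) * (Polynomial.X + 1)) hf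
    (by rw [← hode, Polynomial.C_1]; ring)
  have h₂ := rootMultiplicity_mul_eval_of_mul_derivative_eq (r := -1)
    (q := ((n : Polynomial R) + 1) * (Polynomial.X - 1)) hf
    (by rw [← hode, Polynomial.C_neg, Polynomial.C_1]; ring)
  simp only [Polynomial.eval_mul, Polynomial.eval_add, Polynomial.eval_sub, Polynomial.eval_natCast,
    Polynomial.eval_one, Polynomial.eval_X, Polynomial.eval_C] at h₁ h₂
  constructor
  · linear_combination h₁
  · linear_combination -h₂

lemma dvd_of_homologicalOperator_eq_zero [CharZero R] {m₁ m₂ : ℕ} (hcop : m₁.Coprime m₂)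
    (hd : ((m₁ : R) + m₂) * d = m₁ - m₂) (hp : IsWeightedHomogeneous ![1, n + 1] p j)
    (hp0 : p ≠ 0) (hker : homologicalOperator n d p = 0) : (n + 1) * (m₁ + m₂) ∣ j := by
  obtain ⟨ha, hb⟩ := rootMultiplicity_dehomogenize hp hp0 hker
  generalize (dehomogenize p).rootMultiplicity 1 = a at ha
  generalize (dehomogenize p).rootMultiplicity (-1) = b at hb
  have hm₁ : j * m₁ = (n + 1) * (m₁ + m₂) * a := by
    apply Nat.cast_injective (R := R)
    push_cast
    apply mul_left_cancel₀ (two_ne_zero (α := R))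
    linear_combination -((m₁ : R) + m₂) * ha - j * hd
  have hm₂ : j * m₂ = (n + 1) * (m₁ + m₂) * b := by
    apply Nat.cast_injective (R := R)
    push_cast
    apply mul_left_cancel₀ (two_ne_zero (α := R))
    linear_combination -((m₁ : R) + m₂) * hb + j * hd
  have hgcd := Nat.dvd_gcd (Dvd.intro _ hm₁.symm) (Dvd.intro _ hm₂.symm)
  rwa [Nat.gcd_mul_left, hcop.gcd_eq_one, mul_one] at hgcd

end VectorField

theorem kernel_of_homological_operator_general {K : Type*} [Field K] [CharZero K] {n m₁ m₂ j : ℕ}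
    (hcop : m₁.Coprime m₂) {p : MvPolynomial (Fin 2) K}
    (hp : IsWeightedHomogeneous ![1, n + 1] p j)
    (hker : homologicalOperator n (((m₁ : K) - m₂) / (m₁ + m₂)) p = 0) :
    ((n + 1) * (m₁ + m₂) ∣ j →
      ∃ c : K, p = C c * primitiveIntegral K n m₁ m₂ ^ (j / ((n + 1) * (m₁ + m₂)))) ∧
    (¬ (n + 1) * (m₁ + m₂) ∣ j → p = 0) := by
  have hsum : m₁ + m₂ ≠ 0 := by
    intro h
    obtain ⟨rfl, rfl⟩ := Nat.add_eq_zero_iff.1 h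
    exact Nat.not_coprime_zero_zero hcop
  have hd : ((m₁ : K) + m₂) * (((m₁ : K) - m₂) / (m₁ + m₂)) = m₁ - m₂ :=
    mul_div_cancel₀ _ (mod_cast hsum)
  constructor
  · intro hdvd
    have hI := (isWeightedHomogeneous_primitiveIntegral (R := K) n m₁ m₂).pow
      (j / ((n + 1) * (m₁ + m₂)))
    rw [smul_eq_mul, Nat.div_mul_cancel hdvd] at hI
    refine exists_eq_C_mul_of_derivation_eq_zero
      (dehomogenize_eulerWedge_homologicalOperator_ne_zero n _) hp hI
      (pow_ne_zero _ (primitiveIntegral_ne_zero n m₁ m₂)) hker ?_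
    rw [Derivation.leibniz_pow, homologicalOperator_primitiveIntegral n hd, smul_zero, smul_zero]
  · contrapose!
    exact fun hp0 ↦ dvd_of_homologicalOperator_eq_zero hcop hd hp hp0 hker

lemma homologicalOperator_eq_gradDot (n : ℕ) (d : ℝ) (p : MvPolynomial (Fin 2) ℝ) :
    homologicalOperator n d p = gradDot p (X 1 + C d * X 0 ^ (n + 1))
      (C ((n : ℝ) + 1) * X 0 ^ (2 * n + 1) + C (((n : ℝ) + 1) * d) * X 0 ^ n * X 1) := by
  rw [derivation_fin_two_apply, homologicalOperator_X_zero, homologicalOperator_X_one, gradDot]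

/-- The kernel of `ℓ` consists exactly of the powers of the primitive first
integral `I_M`: a quasi-homogeneous polynomial first integral of `F_n` of
degree `j` is a scalar multiple of `I_M^{j/M}` when `M ∣ j`, and is `0`
otherwise. -/
theorem kernel_of_homological_operator
    (n m₁ m₂ : ℕ) (hn : 1 ≤ n) (hm₁ : 0 < m₁) (hm₂ : 0 < m₂)
    (hcop : Nat.Coprime m₁ m₂) (hne : m₁ ≠ m₂)
    (j : ℕ) (p : MvPolynomial (Fin 2) ℝ) (hp : IsQH 1 (n + 1) j p)
    (hker : gradDot p
        (X 1 + C (((m₁ : ℝ) - (m₂ : ℝ)) / ((m₁ : ℝ) + (m₂ : ℝ))) * X 0 ^ (n + 1))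
        (C ((n : ℝ) + 1) * X 0 ^ (2 * n + 1)
          + C (((n : ℝ) + 1) * (((m₁ : ℝ) - (m₂ : ℝ)) / ((m₁ : ℝ) + (m₂ : ℝ))))
            * X 0 ^ n * X 1) = 0) :
    ((n + 1) * (m₁ + m₂) ∣ j →
      ∃ c : ℝ, p = C c * ((X 1 - X 0 ^ (n + 1)) ^ m₁ * (X 1 + X 0 ^ (n + 1)) ^ m₂)
        ^ (j / ((n + 1) * (m₁ + m₂)))) ∧
    (¬ (n + 1) * (m₁ + m₂) ∣ j → p = 0) :=
  kernel_of_homological_operator_general hcop (isQH_iff.1 hp)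
    ((homologicalOperator_eq_gradDot n _ p).trans hker)
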